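/- Let θ₀ ≥ 1 be an integer, d ≥ 1, and let L be a C¹ map from the closed unit disk of ℝ² minus the origin into ℝ^d such that ∫_{D_1(0)} |x|^{2θ₀} |∇L(x)|² dx < ∞ and ∫_{∂D_1(0)} |L|² dS < ∞. Then the weighted Hardy inequality θ₀² ∫_{D_1(0)} |x|^{2(θ₀ - 1)} |L(x)|² dx ≤ ∫_{D_1(0)} |x|^{2θ₀} |∇L(x)|² dx + θ₀ ∫_{∂D_1(0)} |L|² dS holds; in particular |x|^{θ₀ - 1} L ∈ L²(D_1(0)). -/

import Mathlib

open MeasureTheory Metric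
open scoped ENNReal

/-- The point of the unit circle in `ℝ²` at angle `θ`. -/
noncomputable def circlePt (θ : ℝ) : EuclideanSpace ℝ (Fin 2) :=
  (EuclideanSpace.equiv (Fin 2) ℝ).symm ![Real.cos θ, Real.sin θ]

/-! Along a ray, `0 ≤ r ^ (2 * α - 1) * ‖α • f r + r • f' r‖ ^ 2` expands to
`α ^ 2 * r ^ (2 * α - 1) * ‖f r‖ ^ 2 - r ^ (2 * α + 1) * ‖f' r‖ ^ 2 ≤ α * w' r`, where
`w r = r ^ (2 * α) * ‖f r‖ ^ 2`. Integrating over `[a, b] ⊆ (0, R)`, the term of `w` at `a` has the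
favourable sign and is dropped; then `a → 0` and `b → R`. Since the radial derivative of `L` is at
most `‖fderiv ℝ L x‖`, integrating the one-dimensional inequality over all directions in polar
coordinates gives the result. -/

open Set Filter Module Topology
open scoped Pointwise

theorem continuousOn_rpow_mul_norm_sq {X F : Type*} [TopologicalSpace X] [NormedAddCommGroup F]
    {ρ : X → ℝ} {g : X → F} {s : Set X} (hρ : ContinuousOn ρ s) (hpos : ∀ x ∈ s, 0 < ρ x)
    (hg : ContinuousOn g s) (p : ℝ) : ContinuousOn (fun x => ρ x ^ p * ‖g x‖ ^ 2) s :=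
  (hρ.rpow_const fun x hx => Or.inl (hpos x hx).ne').mul (hg.norm.pow 2)

section Ray

variable {F : Type*} [NormedAddCommGroup F] [InnerProductSpace ℝ F] {α : ℝ}

theorem hasDerivAt_rpow_mul_norm_sq {f : ℝ → F} {f' : F} {r : ℝ} (hr : r ≠ 0)
    (hf : HasDerivAt f f' r) :
    HasDerivAt (fun r => r ^ (2 * α) * ‖f r‖ ^ 2)
      (2 * α * r ^ (2 * α - 1) * ‖f r‖ ^ 2 + r ^ (2 * α) * (2 * inner ℝ (f r) f')) r :=
  (Real.hasDerivAt_rpow_const (Or.inl hr)).fun_mul hf.norm_sq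

theorem sq_mul_rpow_mul_norm_sq_sub_le {r : ℝ} (hr : 0 < r) (x y : F) :
    α ^ 2 * (r ^ (2 * α - 1) * ‖x‖ ^ 2) - r ^ (2 * α + 1) * ‖y‖ ^ 2 ≤
      α * (2 * α * r ^ (2 * α - 1) * ‖x‖ ^ 2 + r ^ (2 * α) * (2 * inner ℝ x y)) := by
  have hsq : ‖α • x + r • y‖ ^ 2 = α ^ 2 * ‖x‖ ^ 2 + 2 * α * r * inner ℝ x y + r ^ 2 * ‖y‖ ^ 2 := by
    rw [norm_add_sq_real, norm_smul, norm_smul, mul_pow, mul_pow, Real.norm_eq_abs,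
      Real.norm_eq_abs, sq_abs, sq_abs, real_inner_smul_left, real_inner_smul_right]
    ring
  have hr₁ : r ^ (2 * α) = r ^ (2 * α - 1) * r := by
    rw [← Real.rpow_add_one hr.ne', sub_add_cancel]
  have hr₂ : r ^ (2 * α + 1) = r ^ (2 * α - 1) * r ^ 2 := by
    rw [Real.rpow_add_one hr.ne', hr₁]; ring
  have hnonneg : 0 ≤ r ^ (2 * α - 1) * ‖α • x + r • y‖ ^ 2 := by positivity
  rw [hsq] at hnonneg
  rw [hr₁, hr₂]
  linarith

variable {f f' : ℝ → F}

theorem intervalIntegral_hardy (hα : 0 ≤ α) {a b : ℝ} (ha : 0 < a) (hab : a ≤ b)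
    (hf : ∀ r ∈ Icc a b, HasDerivAt f (f' r) r) (hf' : ContinuousOn f' (Icc a b)) :
    α ^ 2 * ∫ r in a..b, r ^ (2 * α - 1) * ‖f r‖ ^ 2 ≤
      (∫ r in a..b, r ^ (2 * α + 1) * ‖f' r‖ ^ 2) + α * (b ^ (2 * α) * ‖f b‖ ^ 2) := by
  have hpos : ∀ r ∈ Icc a b, 0 < r := fun r hr => ha.trans_le hr.1
  have hfc : ContinuousOn f (Icc a b) := HasDerivAt.continuousOn hf
  have hint {p : ℝ} {g : ℝ → F} (hg : ContinuousOn g (Icc a b)) :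
      IntervalIntegrable (fun r => r ^ p * ‖g r‖ ^ 2) volume a b :=
    (continuousOn_rpow_mul_norm_sq continuousOn_id hpos hg p).intervalIntegrable_of_Icc hab
  let w' (r : ℝ) : ℝ :=
    2 * α * r ^ (2 * α - 1) * ‖f r‖ ^ 2 + r ^ (2 * α) * (2 * inner ℝ (f r) (f' r))
  have hw' : IntervalIntegrable w' volume a b := by
    have hpow (p : ℝ) : ContinuousOn (fun r : ℝ => r ^ p) (Icc a b) :=
      continuousOn_id.rpow_const fun _ hr => Or.inl (hpos _ hr).ne'
    exact ContinuousOn.intervalIntegrable_of_Icc hab (by fun_prop)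
  have hftc : ∫ r in a..b, w' r = b ^ (2 * α) * ‖f b‖ ^ 2 - a ^ (2 * α) * ‖f a‖ ^ 2 := by
    refine intervalIntegral.integral_eq_sub_of_hasDerivAt
      (f := fun r => r ^ (2 * α) * ‖f r‖ ^ 2) (fun r hr => ?_) hw'
    rw [uIcc_of_le hab] at hr
    exact hasDerivAt_rpow_mul_norm_sq (hpos _ hr).ne' (hf r hr)
  have hmono := intervalIntegral.integral_mono_on hab
    (((hint hfc).const_mul (α ^ 2)).sub (hint hf')) (hw'.const_mul α)
    fun r hr => sq_mul_rpow_mul_norm_sq_sub_le (α := α) (hpos _ hr) (f r) (f' r)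
  rw [intervalIntegral.integral_sub ((hint hfc).const_mul _) (hint hf'),
    intervalIntegral.integral_const_mul, intervalIntegral.integral_const_mul, hftc] at hmono
  have hleft : 0 ≤ α * (a ^ (2 * α) * ‖f a‖ ^ 2) := by positivity
  linarith

theorem setLIntegral_Icc_hardy (hα : 0 ≤ α) {a b : ℝ} (ha : 0 < a) (hab : a ≤ b)
    (hf : ∀ r ∈ Icc a b, HasDerivAt f (f' r) r) (hf' : ContinuousOn f' (Icc a b)) :
    ENNReal.ofReal α ^ 2 *
        ∫⁻ r in Icc a b, ENNReal.ofReal (r ^ (2 * α - 1) * ‖f r‖ ^ 2) ≤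
      (∫⁻ r in Icc a b, ENNReal.ofReal (r ^ (2 * α + 1) * ‖f' r‖ ^ 2)) +
        ENNReal.ofReal α * ENNReal.ofReal (b ^ (2 * α) * ‖f b‖ ^ 2) := by
  have hpos : ∀ r ∈ Icc a b, 0 < r := fun r hr => ha.trans_le hr.1
  have hnonneg (p : ℝ) (g : ℝ → F) {r : ℝ} (hr : r ∈ Icc a b) : 0 ≤ r ^ p * ‖g r‖ ^ 2 :=
    mul_nonneg (Real.rpow_nonneg (hpos _ hr).le p) (sq_nonneg _)
  have htoReal {p : ℝ} {g : ℝ → F} (hg : ContinuousOn g (Icc a b)) :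
      ∫⁻ r in Icc a b, ENNReal.ofReal (r ^ p * ‖g r‖ ^ 2) =
        ENNReal.ofReal (∫ r in a..b, r ^ p * ‖g r‖ ^ 2) := by
    rw [intervalIntegral.integral_of_le hab, ← integral_Icc_eq_integral_Ioc]
    exact (ofReal_integral_eq_lintegral_ofReal
      (continuousOn_rpow_mul_norm_sq continuousOn_id hpos hg p).integrableOn_Icc
      (ae_restrict_of_forall_mem measurableSet_Icc fun _ => hnonneg p g)).symm
  rw [htoReal (HasDerivAt.continuousOn hf), htoReal hf', ← ENNReal.ofReal_pow hα,
    ← ENNReal.ofReal_mul (sq_nonneg α), ← ENNReal.ofReal_mul hα, ← ENNReal.ofReal_add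
      (intervalIntegral.integral_nonneg hab fun _ => hnonneg _ f')
      (mul_nonneg hα (hnonneg _ f (right_mem_Icc.2 hab)))]
  exact ENNReal.ofReal_le_ofReal (intervalIntegral_hardy hα ha hab hf hf')

theorem eventually_le_and_Icc_subset_Ioo {a b : ℝ} (hab : a < b) :
    ∀ᶠ p : ℝ × ℝ in 𝓝[>] a ×ˢ 𝓝[<] b, p.1 ≤ p.2 ∧ Icc p.1 p.2 ⊆ Ioo a b := by
  have hlt : ∀ᶠ p : ℝ × ℝ in 𝓝[>] a ×ˢ 𝓝[<] b, p.1 < p.2 :=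
    (tendsto_nhds_of_tendsto_nhdsWithin tendsto_fst).eventually_lt
      (tendsto_nhds_of_tendsto_nhdsWithin tendsto_snd) hab
  filter_upwards [tendsto_fst self_mem_nhdsWithin, tendsto_snd self_mem_nhdsWithin, hlt]
    with p hp₁ hp₂ hp
  exact ⟨hp.le, Icc_subset_Ioo hp₁ hp₂⟩

theorem setLIntegral_Ioo_hardy (hα : 0 ≤ α) {R : ℝ} (hR : 0 < R) (hfc : ContinuousOn f (Ioc 0 R))
    (hf : ∀ r ∈ Ioo 0 R, HasDerivAt f (f' r) r) (hf' : ContinuousOn f' (Ioo 0 R)) :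
    ENNReal.ofReal α ^ 2 *
        ∫⁻ r in Ioo 0 R, ENNReal.ofReal (r ^ (2 * α - 1) * ‖f r‖ ^ 2) ≤
      (∫⁻ r in Ioo 0 R, ENNReal.ofReal (r ^ (2 * α + 1) * ‖f' r‖ ^ 2)) +
        ENNReal.ofReal α * ENNReal.ofReal (R ^ (2 * α) * ‖f R‖ ^ 2) := by
  let l : Filter (ℝ × ℝ) := 𝓝[>] 0 ×ˢ 𝓝[<] R
  have hsnd : Tendsto Prod.snd l (𝓝[<] R) := tendsto_snd
  have hcover : AECover (volume.restrict (Ioo 0 R)) l fun p => Icc p.1 p.2 :=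
    aecover_Ioo_of_Icc (tendsto_nhds_of_tendsto_nhdsWithin tendsto_fst)
      (tendsto_nhds_of_tendsto_nhdsWithin hsnd)
  have hmeas : AEMeasurable (fun r => ENNReal.ofReal (r ^ (2 * α - 1) * ‖f r‖ ^ 2))
      (volume.restrict (Ioo 0 R)) :=
    ((continuousOn_rpow_mul_norm_sq continuousOn_id (fun _ hr => hr.1)
      (hfc.mono Ioo_subset_Ioc_self) _).aemeasurable measurableSet_Ioo).ennreal_ofReal
  have hboundary : Tendsto (fun p : ℝ × ℝ => p.2 ^ (2 * α) * ‖f p.2‖ ^ 2) l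
      (𝓝 (R ^ (2 * α) * ‖f R‖ ^ 2)) := by
    have hcont := continuousOn_rpow_mul_norm_sq continuousOn_id (fun _ hr => hr.1) hfc
      (2 * α) R (right_mem_Ioc.2 hR)
    have hle : 𝓝[<] R ≤ 𝓝[Ioc 0 R] R := by
      rw [nhdsWithin_Ioc_eq_nhdsLE hR]
      exact nhdsWithin_mono R Iio_subset_Iic_self
    exact (hcont.mono_left hle).comp hsnd
  refine le_of_tendsto_of_tendsto
    (ENNReal.Tendsto.const_mul (hcover.lintegral_tendsto_of_countably_generated hmeas)
      (Or.inr (ENNReal.pow_ne_top ENNReal.ofReal_ne_top)))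
    (tendsto_const_nhds.add (ENNReal.Tendsto.const_mul (ENNReal.tendsto_ofReal hboundary)
      (Or.inr ENNReal.ofReal_ne_top))) ?_
  filter_upwards [eventually_le_and_Icc_subset_Ioo hR] with p ⟨hp, hsub⟩
  rw [Measure.restrict_restrict_of_subset hsub]
  refine (setLIntegral_Icc_hardy hα (hsub (left_mem_Icc.2 hp)).1 hp (fun r hr => hf r (hsub hr))
    (hf'.mono hsub)).trans ?_
  gcongr

end Ray

section Sphere

variable {E : Type*} [NormedAddCommGroup E] [NormedSpace ℝ E]

theorem norm_smul_sphere {r : ℝ} (hr : 0 ≤ r) (u : sphere (0 : E) 1) : ‖r • (u : E)‖ = r := by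
  simp [norm_smul, abs_of_nonneg hr]

theorem smul_sphere_ne_zero {r : ℝ} (hr : 0 < r) (u : sphere (0 : E) 1) : r • (u : E) ≠ 0 :=
  norm_ne_zero_iff.1 (by rw [norm_smul_sphere hr.le]; exact hr.ne')

theorem smul_sphere_mem_ball_sdiff_zero {R r : ℝ} (hr : r ∈ Ioo 0 R) (u : sphere (0 : E) 1) :
    r • (u : E) ∈ ball 0 R \ {0} :=
  ⟨by simpa [norm_smul_sphere hr.1.le] using hr.2, smul_sphere_ne_zero hr.1 u⟩

theorem smul_sphere_mem_closedBall_sdiff_zero {R r : ℝ} (hr : r ∈ Ioc 0 R) (u : sphere (0 : E) 1) :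
    r • (u : E) ∈ closedBall 0 R \ {0} :=
  ⟨by simpa [norm_smul_sphere hr.1.le] using hr.2, smul_sphere_ne_zero hr.1 u⟩

theorem smul_sphere_mem_Ioo_smul_iff {s : Set (sphere (0 : E) 1)} {r : ℝ} (hr : 0 < r)
    (u : sphere (0 : E) 1) :
    r • (u : E) ∈ Ioo (0 : ℝ) 1 • ((↑) '' s : Set E) ↔ r < 1 ∧ u ∈ s := by
  constructor
  · rintro ⟨ρ, hρ, _, ⟨v, hv, rfl⟩, h⟩
    have hsmul : ρ • (v : E) = r • (u : E) := h
    have hnorm : ρ = r := by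
      simpa only [norm_smul_sphere, hρ.1.le, hr.le] using congr_arg norm hsmul
    subst hnorm
    have hvu : v = u := Subtype.ext (smul_right_injective E hr.ne' hsmul)
    exact ⟨hρ.2, hvu ▸ hv⟩
  · rintro ⟨hr₁, hu⟩
    exact smul_mem_smul ⟨hr, hr₁⟩ ⟨u, hu, rfl⟩

theorem measurableSet_Ioo_smul_sphere [MeasurableSpace E] [BorelSpace E]
    {s : Set (sphere (0 : E) 1)} (hs : MeasurableSet s) :
    MeasurableSet (Ioo (0 : ℝ) 1 • ((↑) '' s : Set E)) := by
  have hpolar : MeasurableEmbedding fun p : sphere (0 : E) 1 × Ioi (0 : ℝ) =>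
      (p.2 : ℝ) • (p.1 : E) :=
    (MeasurableEmbedding.subtype_coe (measurableSet_singleton (0 : E)).compl).comp
      (homeomorphUnitSphereProd E).symm.measurableEmbedding
  have himage : Ioo (0 : ℝ) 1 • ((↑) '' s : Set E) =
      (fun p : sphere (0 : E) 1 × Ioi (0 : ℝ) => (p.2 : ℝ) • (p.1 : E)) ''
        (s ×ˢ Iio ⟨1, mem_Ioi.2 one_pos⟩) := by
    ext x
    constructor
    · rintro ⟨r, hr, _, ⟨u, hu, rfl⟩, rfl⟩
      exact ⟨(u, ⟨r, hr.1⟩), ⟨hu, hr.2⟩, rfl⟩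
    · rintro ⟨⟨u, r⟩, ⟨hu, hr⟩, rfl⟩
      exact smul_mem_smul ⟨r.2, hr⟩ ⟨u, hu, rfl⟩
  rw [himage]
  exact hpolar.measurableSet_image' (hs.prod measurableSet_Iio)

end Sphere

theorem aemeasurable_restrict_of_continuousOn_sdiff_singleton {X Y : Type*} [TopologicalSpace X]
    [T1Space X] [MeasurableSpace X] [OpensMeasurableSpace X] [TopologicalSpace Y]
    [MeasurableSpace Y] [BorelSpace Y] {μ : Measure X} [NullSingletonClass μ] {s : Set X}
    (hs : MeasurableSet s) {a : X} {f : X → Y} (hf : ContinuousOn f (s \ {a})) :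
    AEMeasurable f (μ.restrict s) := by
  rw [← Measure.restrict_congr_set (sdiff_null_ae_eq_self (measure_singleton (μ := μ) a))]
  exact hf.aemeasurable (hs.diff (measurableSet_singleton a))

section Polar

variable {E : Type*} [NormedAddCommGroup E] [NormedSpace ℝ E] [FiniteDimensional ℝ E]
  [Nontrivial E] [MeasurableSpace E] [BorelSpace E] {μ : Measure E} [μ.IsAddHaarMeasure]

variable (μ) in
theorem measurePreserving_smul_sphere_prod_Ioi :
    MeasurePreserving (fun p : sphere (0 : E) 1 × Ioi (0 : ℝ) => (p.2 : ℝ) • (p.1 : E))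
      (μ.toSphere.prod (Measure.volumeIoiPow (finrank ℝ E - 1))) μ := by
  have hsymm := MeasurePreserving.symm (homeomorphUnitSphereProd E).toMeasurableEquiv
    μ.measurePreserving_homeomorphUnitSphereProd
  have hcoe := measurePreserving_subtype_coe (μa := μ) (measurableSet_singleton (0 : E)).compl
  rw [restrict_compl_singleton] at hcoe
  exact hcoe.comp hsymm

theorem lintegral_volumeIoiPow (n : ℕ) (u : ℝ → ℝ≥0∞) :
    ∫⁻ r, u r ∂Measure.volumeIoiPow n = ∫⁻ r in Ioi 0, ENNReal.ofReal (r ^ n) * u r := by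
  rw [Measure.volumeIoiPow, lintegral_withDensity_eq_lintegral_mul_non_measurable _ (by fun_prop)
    (ae_of_all _ fun _ => ENNReal.ofReal_lt_top)]
  exact lintegral_subtype_comap measurableSet_Ioi fun r => ENNReal.ofReal (r ^ n) * u r

theorem lintegral_eq_lintegral_toSphere {G : E → ℝ≥0∞} (hG : AEMeasurable G μ) :
    ∫⁻ x, G x ∂μ = ∫⁻ u : sphere (0 : E) 1, (∫⁻ r in Ioi (0 : ℝ),
      ENNReal.ofReal (r ^ (finrank ℝ E - 1)) * G (r • (u : E))) ∂μ.toSphere := by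
  have hpolar := measurePreserving_smul_sphere_prod_Ioi μ
  rw [← hpolar.map_eq] at hG
  calc ∫⁻ x, G x ∂μ
      = ∫⁻ p, G ((p.2 : ℝ) • (p.1 : E))
          ∂μ.toSphere.prod (Measure.volumeIoiPow (finrank ℝ E - 1)) := by
        rw [← lintegral_map' hG hpolar.aemeasurable, hpolar.map_eq]
    _ = ∫⁻ u : sphere (0 : E) 1, (∫⁻ r, G ((r : ℝ) • (u : E))
          ∂Measure.volumeIoiPow (finrank ℝ E - 1)) ∂μ.toSphere :=
        lintegral_prod _ (hG.comp_aemeasurable hpolar.aemeasurable)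
    _ = _ := lintegral_congr fun u => lintegral_volumeIoiPow _ fun r => G (r • (u : E))

theorem setLIntegral_ball_eq_lintegral_toSphere {G : E → ℝ≥0∞} {R : ℝ}
    (hG : AEMeasurable G (μ.restrict (ball 0 R))) :
    ∫⁻ x in ball 0 R, G x ∂μ = ∫⁻ u : sphere (0 : E) 1, (∫⁻ r in Ioo 0 R,
      ENNReal.ofReal (r ^ (finrank ℝ E - 1)) * G (r • (u : E))) ∂μ.toSphere := by
  rw [← lintegral_indicator measurableSet_ball, lintegral_eq_lintegral_toSphere
    ((aemeasurable_indicator_iff measurableSet_ball).2 hG)]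
  refine lintegral_congr fun u => ?_
  rw [← Ioi_inter_Iio, inter_comm, ← setLIntegral_indicator measurableSet_Iio]
  refine setLIntegral_congr_fun measurableSet_Ioi fun r hr => ?_
  have hmem : r • (u : E) ∈ ball 0 R ↔ r ∈ Iio R := by
    simp [norm_smul_sphere (le_of_lt hr)]
  by_cases hrR : r ∈ Iio R <;> simp only [indicator, hmem, hrR, if_true, if_false, mul_zero]

theorem setLIntegral_ball_norm_rpow_mul_norm_sq {F : Type*} [NormedAddCommGroup F]
    {g : E → F} {R : ℝ} (hg : ContinuousOn g (ball 0 R \ {0})) (p : ℝ) :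
    ∫⁻ x in ball 0 R, ENNReal.ofReal (‖x‖ ^ (p - finrank ℝ E) * ‖g x‖ ^ 2) ∂μ =
      ∫⁻ u : sphere (0 : E) 1, (∫⁻ r in Ioo 0 R,
        ENNReal.ofReal (r ^ (p - 1) * ‖g (r • (u : E))‖ ^ 2)) ∂μ.toSphere := by
  have hcont := continuousOn_rpow_mul_norm_sq continuous_norm.continuousOn
    (fun _ hx => norm_pos_iff.2 hx.2) hg (p - finrank ℝ E)
  rw [setLIntegral_ball_eq_lintegral_toSphere (aemeasurable_restrict_of_continuousOn_sdiff_singleton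
    measurableSet_ball hcont).ennreal_ofReal]
  refine lintegral_congr fun u => setLIntegral_congr_fun measurableSet_Ioo fun r hr => ?_
  have hweight : r ^ (finrank ℝ E - 1) * r ^ (p - finrank ℝ E) = r ^ (p - 1) := by
    rw [← Real.rpow_natCast, ← Real.rpow_add hr.1, Nat.cast_pred finrank_pos]
    ring_nf
  rw [norm_smul_sphere hr.1.le, ← ENNReal.ofReal_mul (pow_nonneg hr.1.le _), ← mul_assoc, hweight]

end Polar

theorem norm_circlePt (t : ℝ) : ‖circlePt t‖ = 1 := by
  simp [circlePt, EuclideanSpace.norm_eq]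

theorem continuous_circlePt : Continuous circlePt := by
  refine (EuclideanSpace.equiv (Fin 2) ℝ).symm.continuous.comp (continuous_pi fun i => ?_)
  fin_cases i
  exacts [Real.continuous_cos, Real.continuous_sin]

theorem periodic_circlePt : Function.Periodic circlePt (2 * Real.pi) := fun t => by
  simp [circlePt]

/-- The parametrization `circlePt`, viewed as a map into the unit sphere of `ℝ²`, the space on which
the surface measure `MeasureTheory.Measure.toSphere` lives. -/
noncomputable def spherePt (t : ℝ) : sphere (0 : EuclideanSpace ℝ (Fin 2)) 1 :=
  ⟨circlePt t, by simp [norm_circlePt]⟩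

theorem continuous_spherePt : Continuous spherePt := continuous_circlePt.subtype_mk _

theorem lintegral_euclideanPlane_eq_polar {G : EuclideanSpace ℝ (Fin 2) → ℝ≥0∞}
    (hG : Measurable G) :
    ∫⁻ x, G x = ∫⁻ p in Ioi (0 : ℝ) ×ˢ Ioo (-Real.pi) Real.pi,
      ENNReal.ofReal p.1 * G (p.1 • circlePt p.2) := by
  rw [← Complex.orthonormalBasisOneI.measurePreserving_repr.lintegral_comp hG,
    ← Complex.lintegral_comp_polarCoord_symm, polarCoord_target]
  have hrepr (p : ℝ × ℝ) :
      Complex.orthonormalBasisOneI.repr (Complex.polarCoord.symm p) = p.1 • circlePt p.2 := by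
    ext i
    fin_cases i <;> simp [circlePt, Complex.cos_ofReal_re, Complex.sin_ofReal_re]
  simp only [hrepr, smul_eq_mul]

theorem volume_Ioo_smul_sphere_euclideanPlane {s : Set (sphere (0 : EuclideanSpace ℝ (Fin 2)) 1)}
    (hs : MeasurableSet s) :
    volume (Ioo (0 : ℝ) 1 • ((↑) '' s : Set (EuclideanSpace ℝ (Fin 2)))) =
      2⁻¹ * (volume.restrict (Ioo (-Real.pi) Real.pi)).map spherePt s := by
  have hradial : ∫⁻ r in Ioi (0 : ℝ), (Iio 1).indicator ENNReal.ofReal r = 2⁻¹ := by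
    rw [setLIntegral_indicator measurableSet_Iio, inter_comm, Ioi_inter_Iio,
      setLIntegral_congr Ioo_ae_eq_Ioc, ← ofReal_integral_eq_lintegral_ofReal
        (intervalIntegral.intervalIntegrable_id (a := 0) (b := 1)).1
        (ae_restrict_of_forall_mem measurableSet_Ioc fun r hr => hr.1.le),
      ← intervalIntegral.integral_of_le zero_le_one, integral_id]
    simp
  have hangular : (volume.restrict (Ioo (-Real.pi) Real.pi)).map spherePt s =
      ∫⁻ t in Ioo (-Real.pi) Real.pi, (spherePt ⁻¹' s).indicator 1 t := by
    rw [Measure.map_apply continuous_spherePt.measurable hs,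
      lintegral_indicator_one (continuous_spherePt.measurable hs)]
  have hcone := measurableSet_Ioo_smul_sphere hs
  rw [← lintegral_indicator_one hcone,
    lintegral_euclideanPlane_eq_polar (measurable_one.indicator hcone), hangular, ← hradial,
    ← lintegral_prod_mul (ENNReal.measurable_ofReal.indicator measurableSet_Iio).aemeasurable
      (measurable_one.indicator (continuous_spherePt.measurable hs)).aemeasurable,
    Measure.prod_restrict, ← Measure.volume_eq_prod]
  refine setLIntegral_congr_fun (measurableSet_Ioi.prod measurableSet_Ioo) fun p hp => ?_
  have hmem : p.1 • circlePt p.2 ∈ Ioo (0 : ℝ) 1 • ((↑) '' s) ↔ p.1 < 1 ∧ spherePt p.2 ∈ s :=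
    smul_sphere_mem_Ioo_smul_iff hp.1 (spherePt p.2)
  by_cases h₁ : p.1 < 1 <;> by_cases h₂ : spherePt p.2 ∈ s <;> simp [indicator, hmem, h₁, h₂]

theorem toSphere_euclideanPlane_eq_map :
    (volume : Measure (EuclideanSpace ℝ (Fin 2))).toSphere =
      (volume.restrict (Ioo (-Real.pi) Real.pi)).map spherePt := by
  ext s hs
  rw [Measure.toSphere_apply' _ hs, volume_Ioo_smul_sphere_euclideanPlane hs,
    finrank_euclideanSpace_fin, Nat.cast_two, ← mul_assoc,
    ENNReal.mul_inv_cancel two_ne_zero ENNReal.ofNat_ne_top, one_mul]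

theorem setLIntegral_Ioc_eq_of_periodic {u : ℝ → ℝ≥0∞} {T : ℝ} (hT : 0 < T)
    (hu : Function.Periodic u T) (a b : ℝ) :
    ∫⁻ t in Ioc a (a + T), u t = ∫⁻ t in Ioc b (b + T), u t := by
  have : Fact (0 < T) := ⟨hT⟩
  exact (AddCircle.lintegral_preimage T a hu.lift).trans
    (AddCircle.lintegral_preimage T b hu.lift).symm

theorem lintegral_toSphere_euclideanPlane {g : EuclideanSpace ℝ (Fin 2) → ℝ≥0∞}
    (hg : Measurable fun u : sphere (0 : EuclideanSpace ℝ (Fin 2)) 1 => g u) :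
    ∫⁻ u, g u ∂(volume : Measure (EuclideanSpace ℝ (Fin 2))).toSphere =
      ∫⁻ t in Ioc 0 (2 * Real.pi), g (circlePt t) := by
  have hperiod := setLIntegral_Ioc_eq_of_periodic Real.two_pi_pos
    (periodic_circlePt.comp g) (-Real.pi) 0
  rw [show -Real.pi + 2 * Real.pi = Real.pi by ring, zero_add] at hperiod
  rw [toSphere_euclideanPlane_eq_map, lintegral_map hg continuous_spherePt.measurable,
    setLIntegral_congr Ioo_ae_eq_Ioc]
  exact hperiod

section Hardy

variable {E F : Type*} [NormedAddCommGroup E] [NormedSpace ℝ E] [NormedAddCommGroup F]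
  [InnerProductSpace ℝ F] {α R : ℝ} {L : E → F}

theorem setLIntegral_ray_hardy (hα : 0 ≤ α) (hR : 0 < R)
    (hLc : ContinuousOn L (closedBall 0 R \ {0})) (hL : ContDiffOn ℝ 1 L (ball 0 R \ {0}))
    (u : sphere (0 : E) 1) :
    ENNReal.ofReal α ^ 2 *
        ∫⁻ r in Ioo 0 R, ENNReal.ofReal (r ^ (2 * α - 1) * ‖L (r • (u : E))‖ ^ 2) ≤
      (∫⁻ r in Ioo 0 R, ENNReal.ofReal (r ^ (2 * α + 1) * ‖fderiv ℝ L (r • (u : E))‖ ^ 2)) +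
        ENNReal.ofReal α * ENNReal.ofReal (R ^ (2 * α) * ‖L (R • (u : E))‖ ^ 2) := by
  have hopen : IsOpen (ball (0 : E) R \ {0}) := isOpen_ball.sdiff isClosed_singleton
  have hray : Continuous fun r : ℝ => r • (u : E) := continuous_id.smul continuous_const
  have hderiv : ∀ r ∈ Ioo 0 R, HasDerivAt (fun r : ℝ => L (r • (u : E)))
      (fderiv ℝ L (r • (u : E)) u) r := fun r hr =>
    ((hL.differentiableOn one_ne_zero).differentiableAt
      (hopen.mem_nhds (smul_sphere_mem_ball_sdiff_zero hr u))).hasFDerivAt.comp_hasDerivAt r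
        (by simpa using (hasDerivAt_id r).smul_const (u : E))
  have hderivc : ContinuousOn (fun r : ℝ => fderiv ℝ L (r • (u : E)) u) (Ioo 0 R) :=
    ((hL.continuousOn_fderiv_of_isOpen hopen le_rfl).comp hray.continuousOn
      fun r hr => smul_sphere_mem_ball_sdiff_zero hr u).clm_apply continuousOn_const
  have hradial : ContinuousOn (fun r : ℝ => L (r • (u : E))) (Ioc 0 R) :=
    hLc.comp hray.continuousOn fun r hr => smul_sphere_mem_closedBall_sdiff_zero hr u
  refine (setLIntegral_Ioo_hardy hα hR hradial hderiv hderivc).trans ?_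
  gcongr ?_ + _
  refine setLIntegral_mono' measurableSet_Ioo fun r hr => ENNReal.ofReal_le_ofReal ?_
  have hle : ‖fderiv ℝ L (r • (u : E)) u‖ ≤ ‖fderiv ℝ L (r • (u : E))‖ := by
    simpa using (fderiv ℝ L (r • (u : E))).le_opNorm u
  have hr₀ : 0 ≤ r := hr.1.le
  gcongr

theorem stmt5_general [FiniteDimensional ℝ E] [Nontrivial E] [MeasurableSpace E] [BorelSpace E]
    (μ : Measure E) [μ.IsAddHaarMeasure] (hα : 0 ≤ α) (hR : 0 < R)
    (hLc : ContinuousOn L (closedBall 0 R \ {0})) (hL : ContDiffOn ℝ 1 L (ball 0 R \ {0})) :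
    ENNReal.ofReal α ^ 2 *
        ∫⁻ x in ball 0 R, ENNReal.ofReal (‖x‖ ^ (2 * α - finrank ℝ E) * ‖L x‖ ^ 2) ∂μ ≤
      (∫⁻ x in ball 0 R,
          ENNReal.ofReal (‖x‖ ^ (2 * α + 2 - finrank ℝ E) * ‖fderiv ℝ L x‖ ^ 2) ∂μ) +
        ENNReal.ofReal α * ∫⁻ u : sphere (0 : E) 1,
          ENNReal.ofReal (R ^ (2 * α) * ‖L (R • (u : E))‖ ^ 2) ∂μ.toSphere := by
  have htrace : Continuous fun u : sphere (0 : E) 1 => L (R • (u : E)) :=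
    hLc.comp_continuous (by fun_prop) fun u =>
      smul_sphere_mem_closedBall_sdiff_zero (right_mem_Ioc.2 hR) u
  have hboundary : Measurable fun u : sphere (0 : E) 1 =>
      ENNReal.ofReal (R ^ (2 * α) * ‖L (R • (u : E))‖ ^ 2) :=
    (continuous_const.mul (htrace.norm.pow 2)).measurable.ennreal_ofReal
  have hfderiv := hL.continuousOn_fderiv_of_isOpen (isOpen_ball.sdiff isClosed_singleton) le_rfl
  rw [setLIntegral_ball_norm_rpow_mul_norm_sq hL.continuousOn,
    setLIntegral_ball_norm_rpow_mul_norm_sq hfderiv,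
    ← lintegral_const_mul' _ _ (by finiteness), ← lintegral_const_mul' _ _ (by finiteness),
    ← lintegral_add_right _ (hboundary.const_mul _), show 2 * α + 2 - 1 = 2 * α + 1 by ring]
  exact lintegral_mono fun u => setLIntegral_ray_hardy hα hR hLc hL u

end Hardy

/-- Weighted Hardy inequality on the unit disk: for a `C¹` map `L` on the
closed unit disk minus the origin with `∫ |x|^{2θ₀} |∇L|² < ∞` and `∫_{∂D_1} |L|² < ∞`,
`θ₀² ∫ |x|^{2(θ₀-1)} |L|² ≤ ∫ |x|^{2θ₀} |∇L|² + θ₀ ∫_{∂D_1} |L|²`. -/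
theorem stmt5 (θ₀ d : ℕ) (hθ : 1 ≤ θ₀) (hd : 1 ≤ d)
    (L : EuclideanSpace ℝ (Fin 2) → EuclideanSpace ℝ (Fin d))
    (hL : ContDiffOn ℝ 1 L (closedBall (0 : EuclideanSpace ℝ (Fin 2)) 1 \ {0}))
    (h1 : ∫⁻ x in ball (0 : EuclideanSpace ℝ (Fin 2)) 1,
        ENNReal.ofReal (‖x‖ ^ (2 * θ₀) * ‖fderiv ℝ L x‖ ^ 2) < ⊤)
    (h2 : ∫⁻ θ in Set.Ioc (0 : ℝ) (2 * Real.pi),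
        ENNReal.ofReal (‖L (circlePt θ)‖ ^ 2) < ⊤) :
    (θ₀ : ℝ≥0∞) ^ 2 * ∫⁻ x in ball (0 : EuclideanSpace ℝ (Fin 2)) 1,
        ENNReal.ofReal (‖x‖ ^ (2 * (θ₀ - 1)) * ‖L x‖ ^ 2)
      ≤ (∫⁻ x in ball (0 : EuclideanSpace ℝ (Fin 2)) 1,
            ENNReal.ofReal (‖x‖ ^ (2 * θ₀) * ‖fderiv ℝ L x‖ ^ 2))
        + (θ₀ : ℝ≥0∞) * ∫⁻ θ in Set.Ioc (0 : ℝ) (2 * Real.pi),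
            ENNReal.ofReal (‖L (circlePt θ)‖ ^ 2) := by
  have hgrad (x : EuclideanSpace ℝ (Fin 2)) : ‖x‖ ^ (2 * (θ₀ : ℝ)) = ‖x‖ ^ (2 * θ₀) :=
    mod_cast Real.rpow_natCast ‖x‖ (2 * θ₀)
  have hpot (x : EuclideanSpace ℝ (Fin 2)) :
      ‖x‖ ^ (2 * (θ₀ : ℝ) - 2) = ‖x‖ ^ (2 * (θ₀ - 1)) := by
    rw [← Real.rpow_natCast]
    push_cast [hθ]
    ring_nf
  have htrace : Continuous fun u : sphere (0 : EuclideanSpace ℝ (Fin 2)) 1 => L u :=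
    hL.continuousOn.comp_continuous continuous_subtype_val fun u =>
      ⟨sphere_subset_closedBall u.2, ne_zero_of_mem_unit_sphere u⟩
  rw [← lintegral_toSphere_euclideanPlane (g := fun x => ENNReal.ofReal (‖L x‖ ^ 2))
    (htrace.norm.pow 2).measurable.ennreal_ofReal]
  simpa [hgrad, hpot] using stmt5_general volume (Nat.cast_nonneg θ₀) one_pos hL.continuousOn
    (hL.mono (sdiff_subset_sdiff_left ball_subset_closedBall))
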